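/- There exists a constant C > 0 such that for every positive integer N, every positive integer σ dividing N, and every function u that is four times continuously differentiable on a neighbourhood of [0,1]² and vanishes on the boundary of [0,1]², the two-scale interpolant satisfies |||u − Î_{N,N}u||| ≤ C (N^{−1} |u|₂ + σ^{−3} ‖∂⁴u/∂x²∂y²‖_{0,Ω}). -/

import Mathlib

open MeasureTheory Finset

noncomputable section

/-- The hat function `ψ_i^N` on the uniform mesh of `[0,1]` with `N` intervals. -/
def hat (N i : ℕ) (x : ℝ) : ℝ :=
  if ((i : ℝ) - 1) / N ≤ x ∧ x ≤ (i : ℝ) / N then N * (x - ((i : ℝ) - 1) / N)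
  else if (i : ℝ) / N ≤ x ∧ x ≤ ((i : ℝ) + 1) / N then N * (((i : ℝ) + 1) / N - x)
  else 0

/-- The nodal piecewise bilinear interpolant `I_{Nx,Ny} u`. -/
def interp (Nx Ny : ℕ) (u : ℝ × ℝ → ℝ) : ℝ × ℝ → ℝ := fun p =>
  ∑ i ∈ range (Nx + 1), ∑ j ∈ range (Ny + 1),
    u ((i : ℝ) / Nx, (j : ℝ) / Ny) * hat Nx i p.1 * hat Ny j p.2

/-- The one-directional interpolant `I_{Nx,0} u` (interpolation in the `x`-direction only). -/
def interpX (Nx : ℕ) (u : ℝ × ℝ → ℝ) : ℝ × ℝ → ℝ := fun p =>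
  ∑ i ∈ range (Nx + 1), u ((i : ℝ) / Nx, p.2) * hat Nx i p.1

/-- The one-directional interpolant `I_{0,Ny} u` (interpolation in the `y`-direction only). -/
def interpY (Ny : ℕ) (u : ℝ × ℝ → ℝ) : ℝ × ℝ → ℝ := fun p =>
  ∑ j ∈ range (Ny + 1), u (p.1, (j : ℝ) / Ny) * hat Ny j p.2

/-- The two-scale interpolant `Î_{N,N} u = I_{N,σ}u + I_{σ,N}u − I_{σ,σ}u`. -/
def twoScale (N σ : ℕ) (u : ℝ × ℝ → ℝ) : ℝ × ℝ → ℝ := fun p =>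
  interp N σ u p + interp σ N u p - interp σ σ u p

/-- The multiscale interpolant
`I^{(k)}_{N,N} u = Σ_{i=0}^{k} I_{N/2^i, N/2^{k−i}}u − Σ_{i=1}^{k} I_{N/2^i, N/2^{k+1−i}}u`. -/
def msInterp (N k : ℕ) (u : ℝ × ℝ → ℝ) : ℝ × ℝ → ℝ := fun p =>
  ∑ i ∈ range (k + 1), interp (N / 2 ^ i) (N / 2 ^ (k - i)) u p
    - ∑ i ∈ Finset.Icc 1 k, interp (N / 2 ^ i) (N / 2 ^ (k + 1 - i)) u p

/-- The closed square `[0,1]²`. -/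
def unitSquare : Set (ℝ × ℝ) := Set.Icc (0 : ℝ) 1 ×ˢ Set.Icc (0 : ℝ) 1

/-- The open square `Ω = (0,1)²`. -/
def Omega2 : Set (ℝ × ℝ) := Set.Ioo (0 : ℝ) 1 ×ˢ Set.Ioo (0 : ℝ) 1

/-- Partial derivative in `x` (defined a.e. for Lipschitz functions; junk value `0` elsewhere). -/
def pderivX (v : ℝ × ℝ → ℝ) : ℝ × ℝ → ℝ := fun p => deriv (fun x => v (x, p.2)) p.1

/-- Partial derivative in `y` (defined a.e. for Lipschitz functions; junk value `0` elsewhere). -/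
def pderivY (v : ℝ × ℝ → ℝ) : ℝ × ℝ → ℝ := fun p => deriv (fun y => v (p.1, y)) p.2

/-- The `L²(Ω)` norm `‖v‖_{0,Ω}`. -/
def L2norm (v : ℝ × ℝ → ℝ) : ℝ := Real.sqrt (∫ p in Omega2, (v p) ^ 2)

/-- The energy norm `|||v||| = (∫_Ω |∇v|² + ∫_Ω v²)^{1/2}`, gradients taken a.e. -/
def energyNorm (v : ℝ × ℝ → ℝ) : ℝ :=
  Real.sqrt (∫ p in Omega2, ((pderivX v p) ^ 2 + (pderivY v p) ^ 2 + (v p) ^ 2))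

/-- `u` is four times continuously differentiable on a neighbourhood of `[0,1]²`. -/
def C4Near (u : ℝ × ℝ → ℝ) : Prop :=
  ∃ U : Set (ℝ × ℝ), IsOpen U ∧ unitSquare ⊆ U ∧ ContDiffOn ℝ 4 u U

/-- `u` vanishes on the boundary of `[0,1]²`. -/
def VanishOnBoundary (u : ℝ × ℝ → ℝ) : Prop :=
  ∀ p ∈ unitSquare, (p.1 = 0 ∨ p.1 = 1 ∨ p.2 = 0 ∨ p.2 = 1) → u p = 0

/-- The seminorm `|u|₂ = ‖u_xx‖_{0,Ω} + ‖u_xy‖_{0,Ω} + ‖u_yy‖_{0,Ω}`. -/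
def semi2 (u : ℝ × ℝ → ℝ) : ℝ :=
  L2norm (pderivX (pderivX u)) + L2norm (pderivX (pderivY u)) + L2norm (pderivY (pderivY u))

/-- The mixed fourth derivative `∂⁴u/∂x²∂y²`. -/
def uxxyy (u : ℝ × ℝ → ℝ) : ℝ × ℝ → ℝ := pderivX (pderivX (pderivY (pderivY u)))

/-- The bilinear form `B(v,w) = ∫_Ω ∇v·∇w + ∫_Ω v w`, gradients taken a.e. -/
def Bform (v w : ℝ × ℝ → ℝ) : ℝ :=
  ∫ p in Omega2, (pderivX v p * pderivX w p + pderivY v p * pderivY w p + v p * w p)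

/-!
Writing `errX M` and `errY M` for the errors of piecewise linear interpolation in one variable,
`u − Î_{N,N} u = errX N u + errY N u + errX σ (errY σ u) − errX σ (errY N u) − errX N (errY σ u)`.
The first two terms cost one mesh width `N⁻¹` in the energy norm. In each of the last three, the
error in `y` is of second order in a mesh width at most `σ⁻¹`, and the `x`-derivative of the error
in `x` is of first order in such a width, which gives `σ⁻³ ‖u_xxyy‖`. The `y`-derivative is handled
by exchanging the variables. A function that is only `C⁴` near the square is multiplied by a cutoff,
which changes neither side of the estimate.
-/

open scoped ENNReal

section ELpNorm

variable {α β ε ε' : Type*} [MeasurableSpace α] [MeasurableSpace β] {μ : Measure α} {ν : Measure β}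
  {p c : ℝ≥0∞}

lemma eLpNorm_le_const_mul_iff_lintegral [ENorm ε] [ENorm ε'] {f : α → ε} {g : β → ε'}
    (hp : p ≠ 0) (hp' : p ≠ ∞) :
    eLpNorm f p μ ≤ c * eLpNorm g p ν ↔
      ∫⁻ x, ‖f x‖ₑ ^ p.toReal ∂μ ≤ c ^ p.toReal * ∫⁻ y, ‖g y‖ₑ ^ p.toReal ∂ν := by
  have hpos : 0 < p.toReal := ENNReal.toReal_pos hp hp'
  rw [eLpNorm_eq_lintegral_rpow_enorm_toReal hp hp', eLpNorm_eq_lintegral_rpow_enorm_toReal hp hp',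
    one_div, ENNReal.rpow_inv_le_iff hpos, ENNReal.mul_rpow_of_nonneg _ _ hpos.le,
    ENNReal.rpow_inv_rpow hpos.ne']

lemma eLpNorm_finsetSum_measure_le_const_mul [ENorm ε] [ENorm ε'] {ι : Type*} {s : Finset ι}
    {μ : ι → Measure α} {f : α → ε} {g : α → ε'} (hp : p ≠ 0) (hp' : p ≠ ∞)
    (h : ∀ i ∈ s, eLpNorm f p (μ i) ≤ c * eLpNorm g p (μ i)) :
    eLpNorm f p (∑ i ∈ s, μ i) ≤ c * eLpNorm g p (∑ i ∈ s, μ i) := by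
  simp only [eLpNorm_le_const_mul_iff_lintegral hp hp', lintegral_finsetSum_measure,
    Finset.mul_sum] at h ⊢
  exact Finset.sum_le_sum h

lemma eLpNorm_prod_le_const_mul_of_sections [ENorm ε] [TopologicalSpace ε'] [ContinuousENorm ε']
    [SFinite μ] [SFinite ν] {f : α × β → ε} {g : α × β → ε'} (hp : p ≠ 0) (hp' : p ≠ ∞)
    (hg : AEStronglyMeasurable g (μ.prod ν))
    (h : ∀ y, eLpNorm (fun x => f (x, y)) p μ ≤ c * eLpNorm (fun x => g (x, y)) p μ) :
    eLpNorm f p (μ.prod ν) ≤ c * eLpNorm g p (μ.prod ν) := by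
  simp only [eLpNorm_le_const_mul_iff_lintegral hp hp'] at h ⊢
  calc ∫⁻ z, ‖f z‖ₑ ^ p.toReal ∂μ.prod ν
      = ∫⁻ z, ‖f z.swap‖ₑ ^ p.toReal ∂ν.prod μ :=
        (lintegral_prod_swap _).symm
    _ ≤ ∫⁻ y, ∫⁻ x, ‖f (x, y)‖ₑ ^ p.toReal ∂μ ∂ν := lintegral_prod_le _
    _ ≤ ∫⁻ y, c ^ p.toReal * ∫⁻ x, ‖g (x, y)‖ₑ ^ p.toReal ∂μ ∂ν := lintegral_mono h
    _ = c ^ p.toReal * ∫⁻ z, ‖g z‖ₑ ^ p.toReal ∂μ.prod ν := by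
      rw [lintegral_prod_symm _ (hg.enorm.pow_const _), lintegral_const_mul'']
      exact (hg.enorm.pow_const _).lintegral_prod_left'

lemma eLpNorm_le_const_mul_of_ae_enorm_le_eLpNorm_one [TopologicalSpace ε] [ESeminormedAddMonoid ε]
    [TopologicalSpace ε'] [ContinuousENorm ε'] {f : α → ε} {g : α → ε'} (hp : 1 ≤ p)
    (hg : AEStronglyMeasurable g μ) (h : ∀ᵐ x ∂μ, ‖f x‖ₑ ≤ c * eLpNorm g 1 μ) :
    eLpNorm f p μ ≤ c * μ Set.univ * eLpNorm g p μ := by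
  have hinv : p.toReal⁻¹ ≤ 1 := by
    rw [← ENNReal.toReal_inv]
    exact ENNReal.toReal_le_of_le_ofReal zero_le_one (by simpa using hp)
  calc eLpNorm f p μ
      ≤ c * eLpNorm g 1 μ * μ Set.univ ^ p.toReal⁻¹ := by
        simpa using eLpNorm_le_of_ae_enorm_bound h
    _ ≤ c * (eLpNorm g p μ * μ Set.univ ^ (1 - p.toReal⁻¹)) * μ Set.univ ^ p.toReal⁻¹ := by
        gcongr
        simpa using eLpNorm_le_eLpNorm_mul_rpow_measure_univ hp hg
    _ = c * (μ Set.univ ^ (1 - p.toReal⁻¹) * μ Set.univ ^ p.toReal⁻¹) * eLpNorm g p μ := by ring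
    _ = c * μ Set.univ * eLpNorm g p μ := by
        rw [← ENNReal.rpow_add_of_nonneg _ _ (sub_nonneg.2 hinv) (by positivity),
          sub_add_cancel, ENNReal.rpow_one]

lemma eLpNorm_add_add_sub_sub_le {E : Type*} [NormedAddCommGroup E] {f₁ f₂ f₃ f₄ f₅ : α → E}
    (h₁ : AEStronglyMeasurable f₁ μ) (h₂ : AEStronglyMeasurable f₂ μ)
    (h₃ : AEStronglyMeasurable f₃ μ) (h₄ : AEStronglyMeasurable f₄ μ)
    (h₅ : AEStronglyMeasurable f₅ μ) (hp : 1 ≤ p) :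
    eLpNorm (f₁ + f₂ + f₃ - f₄ - f₅) p μ ≤
      eLpNorm f₁ p μ + eLpNorm f₂ p μ +
        (eLpNorm f₃ p μ + eLpNorm f₄ p μ + eLpNorm f₅ p μ) := by
  calc eLpNorm (f₁ + f₂ + f₃ - f₄ - f₅) p μ
      ≤ eLpNorm (f₁ + f₂ + f₃ - f₄) p μ + eLpNorm f₅ p μ :=
        eLpNorm_sub_le (((h₁.add h₂).add h₃).sub h₄) h₅ hp
    _ ≤ eLpNorm (f₁ + f₂ + f₃) p μ + eLpNorm f₄ p μ + eLpNorm f₅ p μ := by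
        gcongr; exact eLpNorm_sub_le ((h₁.add h₂).add h₃) h₄ hp
    _ ≤ eLpNorm (f₁ + f₂) p μ + eLpNorm f₃ p μ + eLpNorm f₄ p μ + eLpNorm f₅ p μ := by
        gcongr; exact eLpNorm_add_le (h₁.add h₂) h₃ hp
    _ ≤ eLpNorm f₁ p μ + eLpNorm f₂ p μ + eLpNorm f₃ p μ + eLpNorm f₄ p μ + eLpNorm f₅ p μ := by
        gcongr; exact eLpNorm_add_le h₁ h₂ hp
    _ = _ := by ring

end ELpNorm

lemma restrict_Ioo_eq_sum_restrict_Ioo {μ : Measure ℝ} [NullSingletonClass μ] {f : ℕ → ℝ}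
    (hf : Monotone f) (n : ℕ) :
    μ.restrict (Set.Ioo (f 0) (f n)) =
      ∑ k ∈ range n, μ.restrict (Set.Ioo (f k) (f (k + 1))) := by
  simp only [restrict_Ioo_eq_restrict_Ioc]
  induction n with
  | zero => simp
  | succ n ih =>
    rw [Finset.sum_range_succ, ← ih, ← Measure.restrict_union
      (Set.Ioc_disjoint_Ioc_of_le le_rfl) measurableSet_Ioc,
      Set.Ioc_union_Ioc_eq_Ioc (hf n.zero_le) (hf n.le_succ)]

open scoped ContDiff Manifold Topology in
lemma exists_contDiff_eqOn_of_contDiffOn {E F : Type*} [NormedAddCommGroup E] [NormedSpace ℝ E]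
    [FiniteDimensional ℝ E] [NormedAddCommGroup F] [NormedSpace ℝ F] {n : ℕ∞} {f : E → F}
    {K U : Set E} (hK : IsClosed K) (hU : IsOpen U) (hKU : K ⊆ U) (hf : ContDiffOn ℝ n f U) :
    ∃ g : E → F, ContDiff ℝ n g ∧ Set.EqOn f g K := by
  obtain ⟨χ, hχU, hχK, -⟩ := exists_contMDiffMap_zero_one_nhds_of_isClosed (n := n) 𝓘(ℝ, E)
    hU.isClosed_compl hK (Set.disjoint_left.2 fun _ hx hxK => hx (hKU hxK))
  refine ⟨fun x => χ x • f x, contDiff_iff_contDiffAt.2 fun x => ?_, fun x hx => ?_⟩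
  · by_cases hx : x ∈ U
    · exact χ.contMDiff.contDiff.contDiffAt.smul (hf.contDiffAt (hU.mem_nhds hx))
    · have hzero : (fun y => χ y • f y) =ᶠ[𝓝 x] fun _ => 0 := by
        filter_upwards [eventually_nhdsSet_iff_forall.1 hχU x hx] with y hy
        rw [hy, zero_smul]
      exact contDiffAt_const.congr_of_eventuallyEq hzero
  · simp only [hχK.self_of_nhdsSet x hx, one_smul]

section Chord

/-- The error at `x` of replacing `v` by its chord over `[a, b]`. -/
def chordErr (a b : ℝ) (v : ℝ → ℝ) (x : ℝ) : ℝ := v x - (v a + (x - a) * slope v a b)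

lemma enorm_sub_le_eLpNorm_one_deriv {E : Type*} [NormedAddCommGroup E] [NormedSpace ℝ E]
    {v : ℝ → E} (hv : ContDiff ℝ 1 v) {a b x y : ℝ} (hx : x ∈ Set.Icc a b) (hy : y ∈ Set.Icc a b) :
    ‖v x - v y‖ₑ ≤ eLpNorm (deriv v) 1 (volume.restrict (Set.Ioo a b)) := by
  wlog hyx : y ≤ x generalizing x y
  · rw [← enorm_neg, neg_sub]
    exact this hy hx (le_of_not_ge hyx)
  rw [eLpNorm_one_eq_lintegral_enorm, restrict_Ioo_eq_restrict_Icc]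
  exact (enorm_sub_le_lintegral_deriv_of_contDiffOn_Icc hv.contDiffOn hyx).trans
    (lintegral_mono_set (Set.Icc_subset_Icc hy.1 hx.2))

variable {a b x : ℝ} {v : ℝ → ℝ}

lemma enorm_chordErr_le_eLpNorm_one_deriv (hab : a < b) (hv : ContDiff ℝ 1 v)
    (hx : x ∈ Set.Icc a b) :
    ‖chordErr a b v x‖ₑ ≤ eLpNorm (deriv v) 1 (volume.restrict (Set.Ioo a b)) := by
  set M := eLpNorm (deriv v) 1 (volume.restrict (Set.Ioo a b))
  set t := (x - a) / (b - a)
  have hpos : 0 < b - a := sub_pos.2 hab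
  have ht0 : 0 ≤ t := div_nonneg (sub_nonneg.2 hx.1) hpos.le
  have ht1 : t ≤ 1 := (div_le_one hpos).2 (sub_le_sub_right hx.2 a)
  have hconvex : chordErr a b v x = (1 - t) • (v x - v a) + t • (v x - v b) := by
    simp only [chordErr, slope_def_field, smul_eq_mul, t]
    ring
  calc ‖chordErr a b v x‖ₑ
      ≤ ‖1 - t‖ₑ * ‖v x - v a‖ₑ + ‖t‖ₑ * ‖v x - v b‖ₑ := by
        rw [hconvex, ← enorm_smul, ← enorm_smul]
        exact enorm_add_le _ _
    _ ≤ ‖1 - t‖ₑ * M + ‖t‖ₑ * M := by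
        gcongr
        · exact enorm_sub_le_eLpNorm_one_deriv hv hx (Set.left_mem_Icc.2 hab.le)
        · exact enorm_sub_le_eLpNorm_one_deriv hv hx (Set.right_mem_Icc.2 hab.le)
    _ = M := by
        rw [Real.enorm_of_nonneg ht0, Real.enorm_of_nonneg (sub_nonneg.2 ht1), ← add_mul,
          ← ENNReal.ofReal_add (sub_nonneg.2 ht1) ht0, sub_add_cancel, ENNReal.ofReal_one, one_mul]

lemma chordErr_left : chordErr a b v a = 0 := by simp [chordErr]

lemma hasDerivAt_chordErr (hv : DifferentiableAt ℝ v x) :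
    HasDerivAt (chordErr a b v) (deriv v x - slope v a b) x := by
  have hchord : HasDerivAt (fun y => v a + (y - a) * slope v a b) (slope v a b) x := by
    simpa using (((hasDerivAt_id x).sub_const a).mul_const (slope v a b)).const_add (v a)
  exact hv.hasDerivAt.sub hchord

lemma enorm_deriv_chordErr_le_eLpNorm_one_deriv_deriv (hab : a < b) (hv : ContDiff ℝ 2 v)
    (hx : x ∈ Set.Icc a b) :
    ‖deriv (chordErr a b v) x‖ₑ ≤
      eLpNorm (deriv (deriv v)) 1 (volume.restrict (Set.Ioo a b)) := by
  have hdiff : Differentiable ℝ v := hv.differentiable two_ne_zero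
  obtain ⟨ξ, hξ, hslope⟩ := exists_deriv_eq_slope v hab hdiff.continuous.continuousOn
    hdiff.differentiableOn
  rw [(hasDerivAt_chordErr hdiff.differentiableAt).deriv, slope_def_field, ← hslope]
  exact enorm_sub_le_eLpNorm_one_deriv (hv.deriv' (n := 1)) hx
    (Set.Ioo_subset_Icc_self hξ)

lemma contDiff_chordErr {n : WithTop ℕ∞} (hv : ContDiff ℝ n v) : ContDiff ℝ n (chordErr a b v) := by
  unfold chordErr
  fun_prop

lemma enorm_chordErr_le_eLpNorm_one_deriv_deriv (hab : a < b) (hv : ContDiff ℝ 2 v)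
    (hx : x ∈ Set.Icc a b) :
    ‖chordErr a b v x‖ₑ ≤
      ENNReal.ofReal (b - a) * eLpNorm (deriv (deriv v)) 1 (volume.restrict (Set.Ioo a b)) := by
  calc ‖chordErr a b v x‖ₑ
      = ‖chordErr a b v x - chordErr a b v a‖ₑ := by rw [chordErr_left, sub_zero]
    _ ≤ eLpNorm (deriv (chordErr a b v)) 1 (volume.restrict (Set.Ioo a b)) :=
        enorm_sub_le_eLpNorm_one_deriv (contDiff_chordErr (hv.of_le one_le_two)) hx
          (Set.left_mem_Icc.2 hab.le)
    _ ≤ eLpNorm (deriv (deriv v)) 1 (volume.restrict (Set.Ioo a b)) *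
          volume.restrict (Set.Ioo a b) Set.univ := by
        simpa using eLpNorm_le_of_ae_enorm_bound (p := 1)
          (μ := volume.restrict (Set.Ioo a b)) (f := deriv (chordErr a b v))
          (ae_restrict_of_forall_mem measurableSet_Ioo fun y hy =>
            enorm_deriv_chordErr_le_eLpNorm_one_deriv_deriv hab hv (Set.Ioo_subset_Icc_self hy))
    _ = _ := by rw [Measure.restrict_apply_univ, Real.volume_Ioo, mul_comm]

variable {p : ℝ≥0∞}

lemma eLpNorm_le_of_forall_Ioo_enorm_le_eLpNorm_one {c : ℝ≥0∞} {f g : ℝ → ℝ} (hp : 1 ≤ p)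
    (hg : Continuous g)
    (h : ∀ x ∈ Set.Ioo a b, ‖f x‖ₑ ≤ c * eLpNorm g 1 (volume.restrict (Set.Ioo a b))) :
    eLpNorm f p (volume.restrict (Set.Ioo a b)) ≤
      c * ENNReal.ofReal (b - a) * eLpNorm g p (volume.restrict (Set.Ioo a b)) := by
  simpa only [Measure.restrict_apply_univ, Real.volume_Ioo] using
    eLpNorm_le_const_mul_of_ae_enorm_le_eLpNorm_one hp hg.aestronglyMeasurable
      (ae_restrict_of_forall_mem measurableSet_Ioo h)

lemma eLpNorm_chordErr_le_deriv (hp : 1 ≤ p) (hab : a < b) (hv : ContDiff ℝ 1 v) :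
    eLpNorm (chordErr a b v) p (volume.restrict (Set.Ioo a b)) ≤
      ENNReal.ofReal (b - a) * eLpNorm (deriv v) p (volume.restrict (Set.Ioo a b)) := by
  simpa only [one_mul] using eLpNorm_le_of_forall_Ioo_enorm_le_eLpNorm_one (c := 1) hp
    hv.continuous_deriv_one fun x hx => by
      simpa only [one_mul] using
        enorm_chordErr_le_eLpNorm_one_deriv hab hv (Set.Ioo_subset_Icc_self hx)

lemma eLpNorm_deriv_chordErr_le_deriv_deriv (hp : 1 ≤ p) (hab : a < b) (hv : ContDiff ℝ 2 v) :
    eLpNorm (deriv (chordErr a b v)) p (volume.restrict (Set.Ioo a b)) ≤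
      ENNReal.ofReal (b - a) * eLpNorm (deriv (deriv v)) p (volume.restrict (Set.Ioo a b)) := by
  simpa only [one_mul] using eLpNorm_le_of_forall_Ioo_enorm_le_eLpNorm_one (c := 1) hp
    (hv.deriv' (n := 1)).continuous_deriv_one fun x hx => by
      simpa only [one_mul] using
        enorm_deriv_chordErr_le_eLpNorm_one_deriv_deriv hab hv (Set.Ioo_subset_Icc_self hx)

lemma eLpNorm_chordErr_le_deriv_deriv (hp : 1 ≤ p) (hab : a < b) (hv : ContDiff ℝ 2 v) :
    eLpNorm (chordErr a b v) p (volume.restrict (Set.Ioo a b)) ≤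
      ENNReal.ofReal (b - a) ^ 2 * eLpNorm (deriv (deriv v)) p (volume.restrict (Set.Ioo a b)) := by
  simpa only [sq] using eLpNorm_le_of_forall_Ioo_enorm_le_eLpNorm_one hp
    (hv.deriv' (n := 1)).continuous_deriv_one fun x hx =>
      enorm_chordErr_le_eLpNorm_one_deriv_deriv hab hv (Set.Ioo_subset_Icc_self hx)

end Chord

section Mesh

/-- The `k`-th node of the uniform mesh of `[0, 1]` with `N` cells. -/
def node (N k : ℕ) : ℝ := (k : ℝ) / N

/-- The nodal piecewise linear interpolant of `v` on the uniform mesh with `N` cells. -/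
def linInterp (N : ℕ) (v : ℝ → ℝ) (x : ℝ) : ℝ := ∑ i ∈ range (N + 1), v (node N i) * hat N i x

/-- The error of piecewise linear interpolation of `v` on the uniform mesh with `N` cells. -/
def linErr (N : ℕ) (v : ℝ → ℝ) (x : ℝ) : ℝ := v x - linInterp N v x

variable {N k : ℕ} {x : ℝ} {v : ℝ → ℝ}

lemma monotone_node (N : ℕ) : Monotone (node N) := fun _ _ h => by
  unfold node
  gcongr

lemma node_succ_sub_node (N k : ℕ) : node N (k + 1) - node N k = (N : ℝ)⁻¹ := by
  simp only [node, Nat.cast_add, Nat.cast_one]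
  ring

lemma node_lt_node_succ (hN : 0 < N) (k : ℕ) : node N k < node N (k + 1) :=
  sub_pos.1 (node_succ_sub_node N k ▸ inv_pos.2 (Nat.cast_pos.2 hN))

lemma ofReal_node_succ_sub_node (hN : 0 < N) (k : ℕ) :
    ENNReal.ofReal (node N (k + 1) - node N k) = (N : ℝ≥0∞)⁻¹ := by
  rw [node_succ_sub_node, ENNReal.ofReal_inv_of_pos (Nat.cast_pos.2 hN), ENNReal.ofReal_natCast]

lemma restrict_Ioo_zero_one_eq_sum_cells (hN : 0 < N) (μ : Measure ℝ) [NullSingletonClass μ] :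
    μ.restrict (Set.Ioo 0 1) =
      ∑ k ∈ range N, μ.restrict (Set.Ioo (node N k) (node N (k + 1))) := by
  have hzero : node N 0 = 0 := by simp [node]
  have hone : node N N = 1 := div_self (Nat.cast_ne_zero.2 hN.ne')
  rw [← restrict_Ioo_eq_sum_restrict_Ioo (monotone_node N) N, hzero, hone]

lemma ae_exists_mem_cell (hN : 0 < N) :
    ∀ᵐ x ∂volume.restrict (Set.Ioo 0 1), ∃ k < N, x ∈ Set.Ioo (node N k) (node N (k + 1)) := by
  rw [restrict_Ioo_zero_one_eq_sum_cells hN, ae_finsetSum_measure_iff]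
  exact fun k hk => ae_restrict_of_forall_mem measurableSet_Ioo fun x hx =>
    ⟨k, mem_range.1 hk, hx⟩

lemma hat_eq_max (hN : 0 < N) (i : ℕ) (x : ℝ) : hat N i x = max 0 (1 - |(N : ℝ) * x - i|) := by
  have hN' : (0 : ℝ) < N := by exact_mod_cast hN
  have hleft : (N : ℝ) * (x - ((i : ℝ) - 1) / N) = N * x - i + 1 := by field_simp; ring
  have hright : (N : ℝ) * (((i : ℝ) + 1) / N - x) = 1 - (N * x - i) := by field_simp; ring
  simp only [hat, hleft, hright, div_le_iff₀ hN', le_div_iff₀ hN', mul_comm x (N : ℝ)]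
  split_ifs with hl hr
  · rw [abs_of_nonpos (by linarith), max_eq_right (by linarith)]; ring
  · rw [abs_of_nonneg (by linarith), max_eq_right (by linarith)]
  · rw [max_eq_left]
    by_contra! hpos
    have hnear : |(N : ℝ) * x - i| < 1 := by linarith
    rw [abs_lt] at hnear
    rcases le_total ((N : ℝ) * x) i with h | h
    · exact hl ⟨by linarith, h⟩
    · exact hr ⟨h, by linarith⟩

lemma continuous_hat (hN : 0 < N) (i : ℕ) : Continuous (hat N i) := by
  rw [funext (hat_eq_max hN i)]
  fun_prop

lemma linInterp_eq_of_mem_cell (hk : k < N) (v : ℝ → ℝ)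
    (hx : x ∈ Set.Icc (node N k) (node N (k + 1))) :
    linInterp N v x = v (node N k) + (N * x - k) * (v (node N (k + 1)) - v (node N k)) := by
  have hN : 0 < N := k.zero_le.trans_lt hk
  have hN' : (0 : ℝ) < N := Nat.cast_pos.2 hN
  obtain ⟨hleft, hright⟩ := hx
  rw [node, div_le_iff₀ hN', mul_comm] at hleft
  rw [node, le_div_iff₀ hN', mul_comm, Nat.cast_add_one] at hright
  have hfar : ∀ i ∈ range (N + 1), i ≠ k ∧ i ≠ k + 1 → v (node N i) * hat N i x = 0 := by
    intro i _ hi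
    rw [hat_eq_max hN, max_eq_left, mul_zero]
    rcases lt_or_gt_of_ne hi.1 with h | h
    · have : (i : ℝ) + 1 ≤ k := by exact_mod_cast h
      rw [abs_of_nonneg (by linarith)]
      linarith
    · have : (k : ℝ) + 1 + 1 ≤ i := by exact_mod_cast lt_of_le_of_ne h hi.2.symm
      rw [abs_of_nonpos (by linarith)]
      linarith
  rw [linInterp, Finset.sum_eq_add_of_mem k (k + 1) (mem_range.2 (by omega))
    (mem_range.2 (by omega)) (by omega) hfar, hat_eq_max hN, hat_eq_max hN, Nat.cast_add_one,
    abs_of_nonneg (by linarith), abs_of_nonpos (by linarith), max_eq_right (by linarith),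
    max_eq_right (by linarith)]
  ring

lemma linErr_eq_chordErr_of_mem_cell (hk : k < N) (v : ℝ → ℝ)
    (hx : x ∈ Set.Icc (node N k) (node N (k + 1))) :
    linErr N v x = chordErr (node N k) (node N (k + 1)) v x := by
  have hN : (N : ℝ) ≠ 0 := Nat.cast_ne_zero.2 (k.zero_le.trans_lt hk).ne'
  rw [linErr, linInterp_eq_of_mem_cell hk v hx, chordErr, slope_def_field, node_succ_sub_node,
    div_inv_eq_mul, node]
  field_simp

lemma linErr_eventuallyEq_chordErr (hk : k < N) (v : ℝ → ℝ)
    (hx : x ∈ Set.Ioo (node N k) (node N (k + 1))) :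
    linErr N v =ᶠ[nhds x] chordErr (node N k) (node N (k + 1)) v := by
  filter_upwards [isOpen_Ioo.mem_nhds hx] with y hy
  exact linErr_eq_chordErr_of_mem_cell hk v (Set.Ioo_subset_Icc_self hy)

lemma ae_differentiableAt_linErr (hN : 0 < N) :
    ∀ᵐ x ∂volume.restrict (Set.Ioo 0 1),
      ∀ v : ℝ → ℝ, DifferentiableAt ℝ v x → DifferentiableAt ℝ (linErr N v) x := by
  filter_upwards [ae_exists_mem_cell hN] with x ⟨k, hk, hx⟩ v hv
  exact (linErr_eventuallyEq_chordErr hk v hx).differentiableAt_iff.2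
    (hasDerivAt_chordErr hv).differentiableAt

variable {p : ℝ≥0∞}

lemma eLpNorm_Ioo_zero_one_le_of_cells (hp : 1 ≤ p) (hp' : p ≠ ∞) (hN : 0 < N) {c : ℝ≥0∞}
    {f g : ℝ → ℝ} {φ : ℕ → ℝ → ℝ}
    (hf : ∀ k < N, Set.EqOn f (φ k) (Set.Ioo (node N k) (node N (k + 1))))
    (hφ : ∀ k, eLpNorm (φ k) p (volume.restrict (Set.Ioo (node N k) (node N (k + 1)))) ≤
      c * eLpNorm g p (volume.restrict (Set.Ioo (node N k) (node N (k + 1))))) :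
    eLpNorm f p (volume.restrict (Set.Ioo 0 1)) ≤
      c * eLpNorm g p (volume.restrict (Set.Ioo 0 1)) := by
  rw [restrict_Ioo_zero_one_eq_sum_cells hN]
  refine eLpNorm_finsetSum_measure_le_const_mul (one_pos.trans_le hp).ne' hp' fun k hk => ?_
  rw [eLpNorm_congr_ae (ae_restrict_of_forall_mem measurableSet_Ioo (hf k (mem_range.1 hk)))]
  exact hφ k

lemma eLpNorm_linErr_le_deriv (hp : 1 ≤ p) (hp' : p ≠ ∞) (hN : 0 < N) (hv : ContDiff ℝ 1 v) :
    eLpNorm (linErr N v) p (volume.restrict (Set.Ioo 0 1)) ≤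
      (N : ℝ≥0∞)⁻¹ * eLpNorm (deriv v) p (volume.restrict (Set.Ioo 0 1)) :=
  eLpNorm_Ioo_zero_one_le_of_cells hp hp' hN
    (fun _ hk _ hx => linErr_eq_chordErr_of_mem_cell hk v (Set.Ioo_subset_Icc_self hx))
    fun k => ofReal_node_succ_sub_node hN k ▸
      eLpNorm_chordErr_le_deriv hp (node_lt_node_succ hN k) hv

lemma eLpNorm_linErr_le_deriv_deriv (hp : 1 ≤ p) (hp' : p ≠ ∞) (hN : 0 < N)
    (hv : ContDiff ℝ 2 v) :
    eLpNorm (linErr N v) p (volume.restrict (Set.Ioo 0 1)) ≤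
      (N : ℝ≥0∞)⁻¹ ^ 2 * eLpNorm (deriv (deriv v)) p (volume.restrict (Set.Ioo 0 1)) :=
  eLpNorm_Ioo_zero_one_le_of_cells hp hp' hN
    (fun _ hk _ hx => linErr_eq_chordErr_of_mem_cell hk v (Set.Ioo_subset_Icc_self hx))
    fun k => ofReal_node_succ_sub_node hN k ▸
      eLpNorm_chordErr_le_deriv_deriv hp (node_lt_node_succ hN k) hv

lemma eLpNorm_deriv_linErr_le_deriv_deriv (hp : 1 ≤ p) (hp' : p ≠ ∞) (hN : 0 < N)
    (hv : ContDiff ℝ 2 v) :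
    eLpNorm (deriv (linErr N v)) p (volume.restrict (Set.Ioo 0 1)) ≤
      (N : ℝ≥0∞)⁻¹ * eLpNorm (deriv (deriv v)) p (volume.restrict (Set.Ioo 0 1)) :=
  eLpNorm_Ioo_zero_one_le_of_cells hp hp' hN
    (fun _ hk _ hx => (linErr_eventuallyEq_chordErr hk v hx).deriv_eq)
    fun k => ofReal_node_succ_sub_node hN k ▸
      eLpNorm_deriv_chordErr_le_deriv_deriv hp (node_lt_node_succ hN k) hv

end Mesh

section PartialDerivatives

variable {u : ℝ × ℝ → ℝ}

lemma contDiff_sectionX {n : WithTop ℕ∞} (hu : ContDiff ℝ n u) (y : ℝ) :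
    ContDiff ℝ n fun x => u (x, y) :=
  hu.comp (contDiff_prodMk_left y)

lemma contDiff_comp_swap {n : WithTop ℕ∞} (hu : ContDiff ℝ n u) : ContDiff ℝ n (u ∘ Prod.swap) :=
  hu.comp (contDiff_snd.prodMk contDiff_fst)

lemma hasDerivAt_pderivX (hu : Differentiable ℝ u) (q : ℝ × ℝ) :
    HasDerivAt (fun x => u (x, q.2)) (pderivX u q) q.1 :=
  DifferentiableAt.hasDerivAt (by fun_prop)

lemma pderivX_comp_swap (u : ℝ × ℝ → ℝ) : pderivX (u ∘ Prod.swap) = pderivY u ∘ Prod.swap := rfl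

lemma pderivY_comp_swap (u : ℝ × ℝ → ℝ) : pderivY (u ∘ Prod.swap) = pderivX u ∘ Prod.swap := rfl

lemma pderivX_eq_fderiv (hu : Differentiable ℝ u) : pderivX u = fun q => fderiv ℝ u q (1, 0) :=
  funext fun q => ((hu q).hasFDerivAt.comp_hasDerivAt q.1
    ((hasDerivAt_id q.1).prodMk (hasDerivAt_const q.1 q.2))).deriv

lemma pderivY_eq_fderiv (hu : Differentiable ℝ u) : pderivY u = fun q => fderiv ℝ u q (0, 1) :=
  funext fun q => ((hu q).hasFDerivAt.comp_hasDerivAt q.2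
    ((hasDerivAt_const q.2 q.1).prodMk (hasDerivAt_id q.2))).deriv

lemma contDiff_pderivX {m n : WithTop ℕ∞} (hu : ContDiff ℝ n u) (hmn : m + 1 ≤ n) :
    ContDiff ℝ m (pderivX u) := by
  rw [pderivX_eq_fderiv ((hu.of_le hmn).differentiable (by simp))]
  exact (hu.fderiv_right hmn).clm_apply contDiff_const

lemma contDiff_pderivY {m n : WithTop ℕ∞} (hu : ContDiff ℝ n u) (hmn : m + 1 ≤ n) :
    ContDiff ℝ m (pderivY u) := by
  rw [pderivY_eq_fderiv ((hu.of_le hmn).differentiable (by simp))]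
  exact (hu.fderiv_right hmn).clm_apply contDiff_const

lemma pderivX_pderivY_comm (hu : ContDiff ℝ 2 u) : pderivX (pderivY u) = pderivY (pderivX u) := by
  have hdiff : Differentiable ℝ u := hu.differentiable two_ne_zero
  have hfderiv : Differentiable ℝ (fderiv ℝ u) :=
    (hu.fderiv_right (m := 1) le_rfl).differentiable one_ne_zero
  have hX : Differentiable ℝ (pderivX u) :=
    (contDiff_pderivX (m := 1) hu le_rfl).differentiable one_ne_zero
  have hY : Differentiable ℝ (pderivY u) :=
    (contDiff_pderivY (m := 1) hu le_rfl).differentiable one_ne_zero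
  rw [pderivX_eq_fderiv hY, pderivY_eq_fderiv hX, pderivX_eq_fderiv hdiff, pderivY_eq_fderiv hdiff]
  funext q
  rw [fderiv_clm_apply (hfderiv q) (by fun_prop), fderiv_clm_apply (hfderiv q) (by fun_prop)]
  simpa using (hu.contDiffAt (x := q)).isSymmSndFDerivAt (by simp) (1, 0) (0, 1)

lemma pderivY_pderivY_pderivX_pderivX (hu : ContDiff ℝ 4 u) :
    pderivY (pderivY (pderivX (pderivX u))) = uxxyy u := by
  have hX : ContDiff ℝ 3 (pderivX u) := contDiff_pderivX hu (by norm_num)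
  have hY : ContDiff ℝ 3 (pderivY u) := contDiff_pderivY hu (by norm_num)
  have hYX : ContDiff ℝ 2 (pderivY (pderivX u)) := contDiff_pderivY hX (by norm_num)
  rw [uxxyy, ← pderivX_pderivY_comm (hX.of_le (by norm_num)), ← pderivX_pderivY_comm hYX,
    ← pderivX_pderivY_comm (hu.of_le (by norm_num)),
    ← pderivX_pderivY_comm (hY.of_le (by norm_num))]

lemma uxxyy_comp_swap (hu : ContDiff ℝ 4 u) : uxxyy (u ∘ Prod.swap) = uxxyy u ∘ Prod.swap := by
  rw [← pderivY_pderivY_pderivX_pderivX hu]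
  rfl

lemma measurable_pderivX (hu : Continuous u) : Measurable (pderivX u) :=
  (measurable_deriv_with_param (f := fun y x => u (x, y)) (hu.comp continuous_swap)).comp
    measurable_swap

lemma measurable_pderivY (hu : Continuous u) : Measurable (pderivY u) :=
  (measurable_pderivX (hu.comp continuous_swap)).comp measurable_swap

end PartialDerivatives

section DirectionalErrors

/-- The error of piecewise linear interpolation in the `x`-direction. -/
def errX (N : ℕ) (w : ℝ × ℝ → ℝ) : ℝ × ℝ → ℝ := w - interpX N w

/-- The error of piecewise linear interpolation in the `y`-direction. -/
def errY (N : ℕ) (w : ℝ × ℝ → ℝ) : ℝ × ℝ → ℝ := w - interpY N w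

variable {N : ℕ} {u w : ℝ × ℝ → ℝ} {p : ℝ≥0∞}

lemma pderivX_errX_section (N : ℕ) (w : ℝ × ℝ → ℝ) (y : ℝ) :
    (fun x => pderivX (errX N w) (x, y)) = deriv (linErr N fun x => w (x, y)) := rfl

lemma continuous_errX (hN : 0 < N) (hw : Continuous w) : Continuous (errX N w) := by
  unfold errX interpX
  have := continuous_hat hN
  fun_prop

lemma continuous_errY (hN : 0 < N) (hw : Continuous w) : Continuous (errY N w) :=
  (continuous_errX hN (hw.comp continuous_swap)).comp continuous_swap

lemma contDiff_sectionX_errY {n : WithTop ℕ∞} (hu : ContDiff ℝ n u) (K : ℕ) (y : ℝ) :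
    ContDiff ℝ n fun x => errY K u (x, y) :=
  (contDiff_sectionX hu y).sub (ContDiff.sum fun j _ =>
    (contDiff_sectionX hu (j / K)).mul (contDiff_const (c := hat K j y)))

lemma hasDerivAt_errY (K : ℕ) (hu : Differentiable ℝ u) (q : ℝ × ℝ) :
    HasDerivAt (fun x => errY K u (x, q.2)) (errY K (pderivX u) q) q.1 :=
  (hasDerivAt_pderivX hu q).sub (HasDerivAt.fun_sum fun j _ =>
    (hasDerivAt_pderivX hu (q.1, (j : ℝ) / K)).mul_const (hat K j q.2))

lemma pderivX_errY (K : ℕ) (hu : Differentiable ℝ u) :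
    pderivX (errY K u) = errY K (pderivX u) :=
  funext fun q => (hasDerivAt_errY K hu q).deriv

lemma restrict_Omega2_eq_prod :
    volume.restrict Omega2 =
      (volume.restrict (Set.Ioo (0 : ℝ) 1)).prod (volume.restrict (Set.Ioo (0 : ℝ) 1)) := by
  rw [Measure.prod_restrict, ← Measure.volume_eq_prod, Omega2]

lemma eLpNorm_comp_swap (f : ℝ × ℝ → ℝ) (p : ℝ≥0∞) :
    eLpNorm (f ∘ Prod.swap) p (volume.restrict Omega2) = eLpNorm f p (volume.restrict Omega2) := by
  rw [restrict_Omega2_eq_prod]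
  conv_rhs => rw [← Measure.prod_swap]
  exact (MeasurableEquiv.prodComm.measurableEmbedding.eLpNorm_map_measure).symm

lemma ae_differentiableAt_errX (hN : 0 < N) :
    ∀ᵐ q ∂volume.restrict Omega2, ∀ w : ℝ × ℝ → ℝ,
      DifferentiableAt ℝ (fun x => w (x, q.2)) q.1 →
        DifferentiableAt ℝ (fun x => errX N w (x, q.2)) q.1 := by
  rw [restrict_Omega2_eq_prod]
  filter_upwards [Measure.quasiMeasurePreserving_fst.ae (ae_differentiableAt_linErr hN)]
    with q hq w hw
  exact hq _ hw

lemma eLpNorm_Omega2_le_of_sections (hp : 1 ≤ p) (hp' : p ≠ ∞) {c : ℝ≥0∞} {f g : ℝ × ℝ → ℝ}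
    (hg : AEStronglyMeasurable g (volume.restrict Omega2))
    (h : ∀ y, eLpNorm (fun x => f (x, y)) p (volume.restrict (Set.Ioo 0 1)) ≤
      c * eLpNorm (fun x => g (x, y)) p (volume.restrict (Set.Ioo 0 1))) :
    eLpNorm f p (volume.restrict Omega2) ≤ c * eLpNorm g p (volume.restrict Omega2) := by
  rw [restrict_Omega2_eq_prod] at hg ⊢
  exact eLpNorm_prod_le_const_mul_of_sections (one_pos.trans_le hp).ne' hp' hg h

lemma eLpNorm_errX_le_pderivX_pderivX (hp : 1 ≤ p) (hp' : p ≠ ∞) (hN : 0 < N)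
    (hw : ∀ y, ContDiff ℝ 2 fun x => w (x, y))
    (hmeas : AEStronglyMeasurable (pderivX (pderivX w)) (volume.restrict Omega2)) :
    eLpNorm (errX N w) p (volume.restrict Omega2) ≤
      (N : ℝ≥0∞)⁻¹ ^ 2 * eLpNorm (pderivX (pderivX w)) p (volume.restrict Omega2) :=
  eLpNorm_Omega2_le_of_sections hp hp' hmeas fun y =>
    eLpNorm_linErr_le_deriv_deriv hp hp' hN (hw y)

lemma eLpNorm_pderivX_errX_le (hp : 1 ≤ p) (hp' : p ≠ ∞) (hN : 0 < N)
    (hw : ∀ y, ContDiff ℝ 2 fun x => w (x, y))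
    (hmeas : AEStronglyMeasurable (pderivX (pderivX w)) (volume.restrict Omega2)) :
    eLpNorm (pderivX (errX N w)) p (volume.restrict Omega2) ≤
      (N : ℝ≥0∞)⁻¹ * eLpNorm (pderivX (pderivX w)) p (volume.restrict Omega2) :=
  eLpNorm_Omega2_le_of_sections hp hp' hmeas fun y => by
    rw [pderivX_errX_section]
    exact eLpNorm_deriv_linErr_le_deriv_deriv hp hp' hN (hw y)

lemma eLpNorm_errY_le_pderivY (hp : 1 ≤ p) (hp' : p ≠ ∞) (hN : 0 < N) (hw : ContDiff ℝ 1 w) :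
    eLpNorm (errY N w) p (volume.restrict Omega2) ≤
      (N : ℝ≥0∞)⁻¹ * eLpNorm (pderivY w) p (volume.restrict Omega2) := by
  have hswap : ContDiff ℝ 1 (w ∘ Prod.swap) := contDiff_comp_swap hw
  rw [← eLpNorm_comp_swap (errY N w), ← eLpNorm_comp_swap (pderivY w)]
  exact eLpNorm_Omega2_le_of_sections hp hp'
    (contDiff_pderivX (m := 0) hswap (by norm_num)).continuous.aestronglyMeasurable
    fun y => eLpNorm_linErr_le_deriv hp hp' hN (contDiff_sectionX hswap y)

lemma eLpNorm_errY_le_pderivY_pderivY (hp : 1 ≤ p) (hp' : p ≠ ∞) (hN : 0 < N)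
    (hw : ContDiff ℝ 2 w) :
    eLpNorm (errY N w) p (volume.restrict Omega2) ≤
      (N : ℝ≥0∞)⁻¹ ^ 2 * eLpNorm (pderivY (pderivY w)) p (volume.restrict Omega2) := by
  have hswap : ContDiff ℝ 2 (w ∘ Prod.swap) := contDiff_comp_swap hw
  have hcont : Continuous (pderivX (pderivX (w ∘ Prod.swap))) :=
    (contDiff_pderivX (m := 0) (contDiff_pderivX (m := 1) hswap (by norm_num))
      (by norm_num)).continuous
  rw [← eLpNorm_comp_swap (errY N w), ← eLpNorm_comp_swap (pderivY (pderivY w))]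
  exact eLpNorm_errX_le_pderivX_pderivX hp hp' hN (contDiff_sectionX hswap)
    hcont.aestronglyMeasurable

end DirectionalErrors

section TwoScaleError

variable {M K N σ : ℕ} {u : ℝ × ℝ → ℝ} {p : ℝ≥0∞}

lemma errX_errY (M K : ℕ) (u : ℝ × ℝ → ℝ) :
    errX M (errY K u) = u - interpX M u - interpY K u + interp M K u := by
  have hcomm : ∀ (q : ℝ × ℝ) (i j : ℕ),
      u ((i : ℝ) / M, (j : ℝ) / K) * hat K j q.2 * hat M i q.1 =
        u ((i : ℝ) / M, (j : ℝ) / K) * hat M i q.1 * hat K j q.2 :=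
    fun _ _ _ => mul_right_comm _ _ _
  funext q
  simp only [errX, errY, interpX, interpY, interp, sub_mul, Finset.sum_sub_distrib,
    Finset.sum_mul, hcomm, Pi.sub_apply, Pi.add_apply]
  ring

lemma sub_twoScale_eq (N σ : ℕ) (u : ℝ × ℝ → ℝ) :
    u - twoScale N σ u =
      errX N u + errY N u + errX σ (errY σ u) - errX σ (errY N u) - errX N (errY σ u) := by
  have htwoScale : twoScale N σ u = interp N σ u + interp σ N u - interp σ σ u := rfl
  rw [errX_errY, errX_errY, errX_errY, htwoScale, errX, errY]
  abel

lemma interp_comp_swap (M K : ℕ) (u : ℝ × ℝ → ℝ) :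
    interp M K (u ∘ Prod.swap) = interp K M u ∘ Prod.swap := by
  funext q
  simp only [interp, Function.comp_apply, Prod.fst_swap, Prod.snd_swap, Prod.swap_prod_mk]
  rw [Finset.sum_comm]
  exact Finset.sum_congr rfl fun j _ => Finset.sum_congr rfl fun i _ => mul_right_comm _ _ _

lemma twoScale_comp_swap (N σ : ℕ) (u : ℝ × ℝ → ℝ) :
    twoScale N σ (u ∘ Prod.swap) = twoScale N σ u ∘ Prod.swap := by
  funext q
  simp only [twoScale, interp_comp_swap, Function.comp_apply]
  ring

lemma continuous_interp (hM : 0 < M) (hK : 0 < K) (u : ℝ × ℝ → ℝ) :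
    Continuous (interp M K u) := by
  unfold interp
  have := continuous_hat hM
  have := continuous_hat hK
  fun_prop

lemma continuous_twoScale (hN : 0 < N) (hσ : 0 < σ) (u : ℝ × ℝ → ℝ) :
    Continuous (twoScale N σ u) :=
  ((continuous_interp hN hσ u).add (continuous_interp hσ hN u)).sub (continuous_interp hσ hσ u)

lemma pderivX_sub_twoScale_ae_eq (hN : 0 < N) (hσ : 0 < σ) (hu : Differentiable ℝ u) :
    pderivX (u - twoScale N σ u) =ᵐ[volume.restrict Omega2]
      pderivX (errX N u) + errY N (pderivX u) + pderivX (errX σ (errY σ u)) -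
        pderivX (errX σ (errY N u)) - pderivX (errX N (errY σ u)) := by
  filter_upwards [ae_differentiableAt_errX hN, ae_differentiableAt_errX hσ] with q hqN hqσ
  have hY (K : ℕ) := hasDerivAt_errY K hu q
  have hXN := (hqN u (hasDerivAt_pderivX hu q).differentiableAt).hasDerivAt
  have hXσYσ := (hqσ (errY σ u) (hY σ).differentiableAt).hasDerivAt
  have hXσYN := (hqσ (errY N u) (hY N).differentiableAt).hasDerivAt
  have hXNYσ := (hqN (errY σ u) (hY σ).differentiableAt).hasDerivAt
  rw [sub_twoScale_eq]
  exact ((((hXN.add (hY N)).add hXσYσ).sub hXσYN).sub hXNYσ).deriv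

/-- The `W^{2,p}` analogue of `semi2`, with values in `[0, ∞]`. -/
def eSemi2 (p : ℝ≥0∞) (u : ℝ × ℝ → ℝ) : ℝ≥0∞ :=
  eLpNorm (pderivX (pderivX u)) p (volume.restrict Omega2) +
    eLpNorm (pderivX (pderivY u)) p (volume.restrict Omega2) +
    eLpNorm (pderivY (pderivY u)) p (volume.restrict Omega2)

lemma eSemi2_comp_swap (hu : ContDiff ℝ 2 u) : eSemi2 p (u ∘ Prod.swap) = eSemi2 p u := by
  simp only [eSemi2, pderivX_comp_swap, pderivY_comp_swap, eLpNorm_comp_swap,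
    pderivX_pderivY_comm hu]
  ring

lemma natCast_inv_le_one (hN : 0 < N) : (N : ℝ≥0∞)⁻¹ ≤ 1 :=
  ENNReal.inv_le_one.2 (Nat.one_le_cast.2 hN)

lemma natCast_inv_le_inv (h : σ ≤ N) : (N : ℝ≥0∞)⁻¹ ≤ (σ : ℝ≥0∞)⁻¹ :=
  ENNReal.inv_le_inv.2 (Nat.cast_le.2 h)

lemma eLpNorm_pderivX_pderivX_errY_le (hp : 1 ≤ p) (hp' : p ≠ ∞) (hK : 0 < K)
    (hu : ContDiff ℝ 4 u) :
    eLpNorm (pderivX (pderivX (errY K u))) p (volume.restrict Omega2) ≤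
      (K : ℝ≥0∞)⁻¹ ^ 2 * eLpNorm (uxxyy u) p (volume.restrict Omega2) := by
  have hX : ContDiff ℝ 3 (pderivX u) := contDiff_pderivX hu (by norm_num)
  rw [pderivX_errY K (hu.differentiable (by norm_num)),
    pderivX_errY K (hX.differentiable (by norm_num)), ← pderivY_pderivY_pderivX_pderivX hu]
  exact eLpNorm_errY_le_pderivY_pderivY hp hp' hK (contDiff_pderivX hX (by norm_num))

lemma aestronglyMeasurable_pderivX_pderivX_errY (hK : 0 < K) (hu : ContDiff ℝ 4 u) :
    AEStronglyMeasurable (pderivX (pderivX (errY K u))) (volume.restrict Omega2) := by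
  have hX : ContDiff ℝ 3 (pderivX u) := contDiff_pderivX hu (by norm_num)
  rw [pderivX_errY K (hu.differentiable (by norm_num))]
  exact (measurable_pderivX (continuous_errY hK hX.continuous)).aestronglyMeasurable

lemma eLpNorm_pderivX_errX_errY_le (hp : 1 ≤ p) (hp' : p ≠ ∞) (hσ : 0 < σ) (hM : σ ≤ M)
    (hK : σ ≤ K) (hu : ContDiff ℝ 4 u) :
    eLpNorm (pderivX (errX M (errY K u))) p (volume.restrict Omega2) ≤
      (σ : ℝ≥0∞)⁻¹ ^ 3 * eLpNorm (uxxyy u) p (volume.restrict Omega2) := by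
  have hK0 : 0 < K := hσ.trans_le hK
  calc eLpNorm (pderivX (errX M (errY K u))) p (volume.restrict Omega2)
      ≤ (M : ℝ≥0∞)⁻¹ * eLpNorm (pderivX (pderivX (errY K u))) p (volume.restrict Omega2) :=
        eLpNorm_pderivX_errX_le hp hp' (hσ.trans_le hM)
          (contDiff_sectionX_errY (hu.of_le (by norm_num)) K)
          (aestronglyMeasurable_pderivX_pderivX_errY hK0 hu)
    _ ≤ (σ : ℝ≥0∞)⁻¹ * ((σ : ℝ≥0∞)⁻¹ ^ 2 * eLpNorm (uxxyy u) p (volume.restrict Omega2)) := by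
        refine mul_le_mul' (natCast_inv_le_inv hM)
          ((eLpNorm_pderivX_pderivX_errY_le hp hp' hK0 hu).trans ?_)
        gcongr
    _ = _ := by ring

lemma eLpNorm_errX_errY_le (hp : 1 ≤ p) (hp' : p ≠ ∞) (hσ : 0 < σ) (hM : σ ≤ M)
    (hK : σ ≤ K) (hu : ContDiff ℝ 4 u) :
    eLpNorm (errX M (errY K u)) p (volume.restrict Omega2) ≤
      (σ : ℝ≥0∞)⁻¹ ^ 4 * eLpNorm (uxxyy u) p (volume.restrict Omega2) := by
  have hK0 : 0 < K := hσ.trans_le hK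
  calc eLpNorm (errX M (errY K u)) p (volume.restrict Omega2)
      ≤ (M : ℝ≥0∞)⁻¹ ^ 2 * eLpNorm (pderivX (pderivX (errY K u))) p (volume.restrict Omega2) :=
        eLpNorm_errX_le_pderivX_pderivX hp hp' (hσ.trans_le hM)
          (contDiff_sectionX_errY (hu.of_le (by norm_num)) K)
          (aestronglyMeasurable_pderivX_pderivX_errY hK0 hu)
    _ ≤ (σ : ℝ≥0∞)⁻¹ ^ 2 *
          ((σ : ℝ≥0∞)⁻¹ ^ 2 * eLpNorm (uxxyy u) p (volume.restrict Omega2)) := by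
        refine mul_le_mul' (pow_le_pow_left' (natCast_inv_le_inv hM) 2)
          ((eLpNorm_pderivX_pderivX_errY_le hp hp' hK0 hu).trans ?_)
        gcongr
    _ = _ := by ring

lemma continuous_pderivX_pderivX (hu : ContDiff ℝ 2 u) : Continuous (pderivX (pderivX u)) :=
  (contDiff_pderivX (m := 0) (contDiff_pderivX (m := 1) hu (by norm_num)) (by norm_num)).continuous

lemma eLpNorm_sub_twoScale_le (hp : 1 ≤ p) (hp' : p ≠ ∞) (hσ : 0 < σ) (hσN : σ ≤ N)
    (hu : ContDiff ℝ 4 u) :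
    eLpNorm (u - twoScale N σ u) p (volume.restrict Omega2) ≤
      (N : ℝ≥0∞)⁻¹ * eSemi2 p u +
        3 * ((σ : ℝ≥0∞)⁻¹ ^ 3 * eLpNorm (uxxyy u) p (volume.restrict Omega2)) := by
  have hN : 0 < N := hσ.trans_le hσN
  have hu2 : ContDiff ℝ 2 u := hu.of_le (by norm_num)
  have hmeas (M K : ℕ) (hM : 0 < M) (hK : 0 < K) :
      AEStronglyMeasurable (errX M (errY K u)) (volume.restrict Omega2) :=
    (continuous_errX hM (continuous_errY hK hu.continuous)).aestronglyMeasurable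
  have hsq : (N : ℝ≥0∞)⁻¹ ^ 2 ≤ (N : ℝ≥0∞)⁻¹ :=
    pow_le_of_le_one bot_le (natCast_inv_le_one hN) two_ne_zero
  have hX := (eLpNorm_errX_le_pderivX_pderivX hp hp' hN (contDiff_sectionX hu2)
    (continuous_pderivX_pderivX hu2).aestronglyMeasurable).trans (mul_le_mul_left hsq _)
  have hY := (eLpNorm_errY_le_pderivY_pderivY hp hp' hN hu2).trans (mul_le_mul_left hsq _)
  have hXY (M K : ℕ) (hM : σ ≤ M) (hK : σ ≤ K) :=
    (eLpNorm_errX_errY_le hp hp' hσ hM hK hu).trans (mul_le_mul_left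
      (pow_le_pow_right_of_le_one' (natCast_inv_le_one hσ) (by norm_num : 3 ≤ 4)) _)
  rw [sub_twoScale_eq]
  refine (eLpNorm_add_add_sub_sub_le (continuous_errX hN hu.continuous).aestronglyMeasurable
    (continuous_errY hN hu.continuous).aestronglyMeasurable (hmeas σ σ hσ hσ) (hmeas σ N hσ hN)
    (hmeas N σ hN hσ) hp).trans (add_le_add ?_ ?_)
  · refine (add_le_add hX hY).trans ?_
    rw [← mul_add]
    unfold eSemi2
    gcongr
    exact le_self_add
  · refine (add_le_add (add_le_add (hXY σ σ le_rfl le_rfl) (hXY σ N le_rfl hσN))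
      (hXY N σ hσN le_rfl)).trans_eq ?_
    ring

lemma eLpNorm_pderivX_sub_twoScale_le (hp : 1 ≤ p) (hp' : p ≠ ∞) (hσ : 0 < σ) (hσN : σ ≤ N)
    (hu : ContDiff ℝ 4 u) :
    eLpNorm (pderivX (u - twoScale N σ u)) p (volume.restrict Omega2) ≤
      (N : ℝ≥0∞)⁻¹ * eSemi2 p u +
        3 * ((σ : ℝ≥0∞)⁻¹ ^ 3 * eLpNorm (uxxyy u) p (volume.restrict Omega2)) := by
  have hN : 0 < N := hσ.trans_le hσN
  have hu2 : ContDiff ℝ 2 u := hu.of_le (by norm_num)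
  have huX : ContDiff ℝ 1 (pderivX u) := contDiff_pderivX hu2 (by norm_num)
  have hmeas (M K : ℕ) (hM : 0 < M) (hK : 0 < K) :
      AEStronglyMeasurable (pderivX (errX M (errY K u))) (volume.restrict Omega2) :=
    (measurable_pderivX (continuous_errX hM
      (continuous_errY hK hu.continuous))).aestronglyMeasurable
  have hX := eLpNorm_pderivX_errX_le hp hp' hN (contDiff_sectionX hu2)
    (continuous_pderivX_pderivX hu2).aestronglyMeasurable
  have hY := eLpNorm_errY_le_pderivY hp hp' hN huX
  rw [← pderivX_pderivY_comm hu2] at hY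
  have hXY (M K : ℕ) (hM : σ ≤ M) (hK : σ ≤ K) :=
    eLpNorm_pderivX_errX_errY_le hp hp' hσ hM hK hu
  rw [eLpNorm_congr_ae (pderivX_sub_twoScale_ae_eq hN hσ (hu.differentiable (by norm_num)))]
  refine (eLpNorm_add_add_sub_sub_le
    (measurable_pderivX (continuous_errX hN hu.continuous)).aestronglyMeasurable
    (continuous_errY hN huX.continuous).aestronglyMeasurable (hmeas σ σ hσ hσ) (hmeas σ N hσ hN)
    (hmeas N σ hN hσ) hp).trans (add_le_add ?_ ?_)
  · refine (add_le_add hX hY).trans ?_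
    rw [← mul_add]
    exact mul_le_mul' le_rfl le_self_add
  · refine (add_le_add (add_le_add (hXY σ σ le_rfl le_rfl) (hXY σ N le_rfl hσN))
      (hXY N σ hσN le_rfl)).trans_eq ?_
    ring

lemma eLpNorm_pderivY_sub_twoScale_le (hp : 1 ≤ p) (hp' : p ≠ ∞) (hσ : 0 < σ) (hσN : σ ≤ N)
    (hu : ContDiff ℝ 4 u) :
    eLpNorm (pderivY (u - twoScale N σ u)) p (volume.restrict Omega2) ≤
      (N : ℝ≥0∞)⁻¹ * eSemi2 p u +
        3 * ((σ : ℝ≥0∞)⁻¹ ^ 3 * eLpNorm (uxxyy u) p (volume.restrict Omega2)) := by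
  have hswap : u ∘ Prod.swap - twoScale N σ (u ∘ Prod.swap) =
      (u - twoScale N σ u) ∘ Prod.swap := by
    rw [twoScale_comp_swap]
    rfl
  rw [← eLpNorm_comp_swap, ← pderivX_comp_swap, ← hswap,
    ← eSemi2_comp_swap (hu.of_le (by norm_num)), ← eLpNorm_comp_swap (uxxyy u),
    ← uxxyy_comp_swap hu]
  exact eLpNorm_pderivX_sub_twoScale_le hp hp' hσ hσN (contDiff_comp_swap hu)

end TwoScaleError

section EnergyNorm

variable {N σ : ℕ} {u v : ℝ × ℝ → ℝ}

lemma measurableSet_Omega2 : MeasurableSet Omega2 := measurableSet_Ioo.prod measurableSet_Ioo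

lemma Omega2_subset_unitSquare : Omega2 ⊆ unitSquare :=
  Set.prod_mono Set.Ioo_subset_Icc_self Set.Ioo_subset_Icc_self

lemma isCompact_unitSquare : IsCompact unitSquare := isCompact_Icc.prod isCompact_Icc

lemma L2norm_nonneg (v : ℝ × ℝ → ℝ) : 0 ≤ L2norm v := Real.sqrt_nonneg _

lemma semi2_nonneg (u : ℝ × ℝ → ℝ) : 0 ≤ semi2 u :=
  add_nonneg (add_nonneg (L2norm_nonneg _) (L2norm_nonneg _)) (L2norm_nonneg _)

lemma L2norm_eq_toReal_eLpNorm (hv : AEStronglyMeasurable v (volume.restrict Omega2)) :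
    L2norm v = (eLpNorm v 2 (volume.restrict Omega2)).toReal := by
  rw [toReal_eLpNorm hv, lpNorm_eq_integral_norm_rpow_toReal two_ne_zero ENNReal.ofNat_ne_top hv,
    L2norm, Real.sqrt_eq_rpow]
  simp

lemma ofReal_L2norm (hv : Continuous v) :
    ENNReal.ofReal (L2norm v) = eLpNorm v 2 (volume.restrict Omega2) := by
  obtain ⟨C, hC⟩ := isCompact_unitSquare.exists_bound_of_continuousOn hv.continuousOn
  have hfinite : IsFiniteMeasure (volume.restrict Omega2) := by
    rw [restrict_Omega2_eq_prod]
    infer_instance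
  have hmem : MemLp v 2 (volume.restrict Omega2) :=
    .of_bound hv.aestronglyMeasurable C <| (ae_restrict_mem measurableSet_Omega2).mono
      fun q hq => hC q (Omega2_subset_unitSquare hq)
  rw [L2norm_eq_toReal_eLpNorm hmem.1, ENNReal.ofReal_toReal hmem.2.ne]

lemma sqrt_sq_add_sq_add_sq_le (a b c : ℝ) : √(a ^ 2 + b ^ 2 + c ^ 2) ≤ |a| + |b| + |c| := by
  rw [Real.sqrt_le_left (by positivity), ← sq_abs a, ← sq_abs b, ← sq_abs c]
  have hcross : 0 ≤ 2 * (|a| * |b| + |a| * |c| + |b| * |c|) := by positivity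
  nlinarith only [hcross]

lemma ofReal_energyNorm_le (hv : Continuous v) :
    ENNReal.ofReal (energyNorm v) ≤
      eLpNorm (pderivX v) 2 (volume.restrict Omega2) +
        eLpNorm (pderivY v) 2 (volume.restrict Omega2) +
          eLpNorm v 2 (volume.restrict Omega2) := by
  have hX := measurable_pderivX hv
  have hY := measurable_pderivY hv
  have hsqrt : energyNorm v =
      L2norm fun q => √(pderivX v q ^ 2 + pderivY v q ^ 2 + v q ^ 2) := by
    unfold energyNorm L2norm
    congr! with q
    exact (Real.sq_sqrt (by positivity)).symm
  rw [hsqrt, L2norm_eq_toReal_eLpNorm (by fun_prop)]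
  refine ENNReal.ofReal_toReal_le.trans ?_
  calc eLpNorm (fun q => √(pderivX v q ^ 2 + pderivY v q ^ 2 + v q ^ 2)) 2
        (volume.restrict Omega2)
      ≤ eLpNorm ((fun q => ‖pderivX v q‖) + (fun q => ‖pderivY v q‖) + fun q => ‖v q‖) 2
        (volume.restrict Omega2) := by
        refine eLpNorm_mono_real fun q => ?_
        rw [Real.norm_of_nonneg (Real.sqrt_nonneg _)]
        exact sqrt_sq_add_sq_add_sq_le _ _ _
    _ ≤ _ := by
        refine (eLpNorm_add_le (by fun_prop) (by fun_prop) one_le_two).trans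
          (add_le_add_left (eLpNorm_add_le (by fun_prop) (by fun_prop) one_le_two) _) |>.trans_eq ?_
        simp only [eLpNorm_norm]

lemma ofReal_semi2 (hu : ContDiff ℝ 2 u) : ENNReal.ofReal (semi2 u) = eSemi2 2 u := by
  have hX : ContDiff ℝ 1 (pderivX u) := contDiff_pderivX hu (by norm_num)
  have hY : ContDiff ℝ 1 (pderivY u) := contDiff_pderivY hu (by norm_num)
  rw [semi2, ENNReal.ofReal_add (add_nonneg (L2norm_nonneg _) (L2norm_nonneg _)) (L2norm_nonneg _),
    ENNReal.ofReal_add (L2norm_nonneg _) (L2norm_nonneg _),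
    ofReal_L2norm (contDiff_pderivX (m := 0) hX (by norm_num)).continuous,
    ofReal_L2norm (contDiff_pderivX (m := 0) hY (by norm_num)).continuous,
    ofReal_L2norm (contDiff_pderivY (m := 0) hY (by norm_num)).continuous, eSemi2]

lemma continuous_uxxyy (hu : ContDiff ℝ 4 u) : Continuous (uxxyy u) := by
  have hY : ContDiff ℝ 3 (pderivY u) := contDiff_pderivY hu (by norm_num)
  exact continuous_pderivX_pderivX (contDiff_pderivY hY (by norm_num))

lemma energyNorm_sub_twoScale_le_of_contDiff (hσ : 0 < σ) (hσN : σ ≤ N) (hu : ContDiff ℝ 4 u) :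
    energyNorm (u - twoScale N σ u) ≤
      9 * ((N : ℝ)⁻¹ * semi2 u + ((σ : ℝ) ^ 3)⁻¹ * L2norm (uxxyy u)) := by
  have hN : 0 < N := hσ.trans_le hσN
  have hS := semi2_nonneg u
  have hG := L2norm_nonneg (uxxyy u)
  have hp : (1 : ℝ≥0∞) ≤ 2 := one_le_two
  have hp' : (2 : ℝ≥0∞) ≠ ∞ := ENNReal.ofNat_ne_top
  have hofReal_N : ENNReal.ofReal (N : ℝ)⁻¹ = (N : ℝ≥0∞)⁻¹ := by
    rw [ENNReal.ofReal_inv_of_pos (by positivity), ENNReal.ofReal_natCast]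
  have hofReal_σ : ENNReal.ofReal ((σ : ℝ) ^ 3)⁻¹ = (σ : ℝ≥0∞)⁻¹ ^ 3 := by
    rw [ENNReal.ofReal_inv_of_pos (by positivity), ENNReal.ofReal_pow (by positivity),
      ENNReal.ofReal_natCast, ENNReal.inv_pow]
  rw [← ENNReal.ofReal_le_ofReal_iff (by positivity), ENNReal.ofReal_mul (by norm_num),
    ENNReal.ofReal_add (by positivity) (by positivity), ENNReal.ofReal_mul (by positivity),
    ENNReal.ofReal_mul (by positivity), hofReal_N, hofReal_σ,
    ofReal_semi2 (hu.of_le (by norm_num)), ofReal_L2norm (continuous_uxxyy hu),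
    ENNReal.ofReal_ofNat]
  calc ENNReal.ofReal (energyNorm (u - twoScale N σ u))
      ≤ _ := ofReal_energyNorm_le (hu.continuous.sub (continuous_twoScale hN hσ u))
    _ ≤ _ := add_le_add (add_le_add (eLpNorm_pderivX_sub_twoScale_le hp hp' hσ hσN hu)
        (eLpNorm_pderivY_sub_twoScale_le hp hp' hσ hσN hu))
        (eLpNorm_sub_twoScale_le hp hp' hσ hσN hu)
    _ = 3 * ((N : ℝ≥0∞)⁻¹ * eSemi2 2 u) +
          9 * ((σ : ℝ≥0∞)⁻¹ ^ 3 * eLpNorm (uxxyy u) 2 (volume.restrict Omega2)) := by ring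
    _ ≤ _ := by
        rw [mul_add]
        gcongr
        norm_num

end EnergyNorm

section Congruence

variable {v w : ℝ × ℝ → ℝ}

lemma eqOn_pderivX (h : Set.EqOn v w Omega2) : Set.EqOn (pderivX v) (pderivX w) Omega2 :=
  fun q hq => Filter.EventuallyEq.deriv_eq <| by
    filter_upwards [isOpen_Ioo.mem_nhds hq.1] with x hx using h ⟨hx, hq.2⟩

lemma eqOn_pderivY (h : Set.EqOn v w Omega2) : Set.EqOn (pderivY v) (pderivY w) Omega2 :=
  fun q hq => Filter.EventuallyEq.deriv_eq <| by
    filter_upwards [isOpen_Ioo.mem_nhds hq.2] with y hy using h ⟨hq.1, hy⟩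

lemma L2norm_congr (h : Set.EqOn v w Omega2) : L2norm v = L2norm w := by
  rw [L2norm, L2norm, setIntegral_congr_fun measurableSet_Omega2 fun q hq => by rw [h hq]]

lemma energyNorm_congr (h : Set.EqOn v w Omega2) : energyNorm v = energyNorm w := by
  rw [energyNorm, energyNorm, setIntegral_congr_fun measurableSet_Omega2 fun q hq => by
    rw [h hq, eqOn_pderivX h hq, eqOn_pderivY h hq]]

lemma eqOn_uxxyy (h : Set.EqOn v w Omega2) : Set.EqOn (uxxyy v) (uxxyy w) Omega2 :=
  eqOn_pderivX (eqOn_pderivX (eqOn_pderivY (eqOn_pderivY h)))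

lemma semi2_congr (h : Set.EqOn v w Omega2) : semi2 v = semi2 w := by
  rw [semi2, L2norm_congr (eqOn_pderivX (eqOn_pderivX h)),
    L2norm_congr (eqOn_pderivX (eqOn_pderivY h)), L2norm_congr (eqOn_pderivY (eqOn_pderivY h)),
    semi2]

lemma div_mem_Icc_of_mem_range {M i : ℕ} (hi : i ∈ range (M + 1)) :
    (i : ℝ) / M ∈ Set.Icc (0 : ℝ) 1 :=
  ⟨by positivity, div_le_one_of_le₀
    (Nat.cast_le.2 (Nat.lt_succ_iff.1 (mem_range.1 hi))) (Nat.cast_nonneg M)⟩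

lemma interp_congr (h : Set.EqOn v w unitSquare) (M K : ℕ) : interp M K v = interp M K w :=
  funext fun _ => Finset.sum_congr rfl fun _ hi => Finset.sum_congr rfl fun _ hj => by
    rw [h (Set.mk_mem_prod (div_mem_Icc_of_mem_range hi) (div_mem_Icc_of_mem_range hj))]

lemma twoScale_congr (h : Set.EqOn v w unitSquare) (N σ : ℕ) :
    twoScale N σ v = twoScale N σ w := by
  unfold twoScale
  rw [interp_congr h, interp_congr h, interp_congr h]

end Congruence

theorem two_scale_interpolant_error_bound_general {N σ : ℕ} (hσ : 0 < σ) (hσN : σ ≤ N)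
    {u : ℝ × ℝ → ℝ} (hu : C4Near u) :
    energyNorm (fun p => u p - twoScale N σ u p) ≤
      9 * ((N : ℝ)⁻¹ * semi2 u + ((σ : ℝ) ^ 3)⁻¹ * L2norm (uxxyy u)) := by
  obtain ⟨U, hU, hsub, hu⟩ := hu
  obtain ⟨w, hw, heq⟩ :=
    exists_contDiff_eqOn_of_contDiffOn (n := 4) isCompact_unitSquare.isClosed hU hsub hu
  have huw : Set.EqOn u w Omega2 := heq.mono Omega2_subset_unitSquare
  have herr : Set.EqOn (fun p => u p - twoScale N σ u p) (w - twoScale N σ w) Omega2 :=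
    fun q hq => by simp only [Pi.sub_apply, twoScale_congr heq, huw hq]
  rw [energyNorm_congr herr, semi2_congr huw, L2norm_congr (eqOn_uxxyy huw)]
  exact energyNorm_sub_twoScale_le_of_contDiff hσ hσN hw

/-- Energy-norm error bound for the two-scale interpolant:
`|||u − Î_{N,N}u||| ≤ C (N⁻¹ |u|₂ + σ⁻³ ‖∂⁴u/∂x²∂y²‖_{0,Ω})`. -/
theorem two_scale_interpolant_error_bound :
    ∃ C : ℝ, 0 < C ∧ ∀ (N σ : ℕ), 0 < N → 0 < σ → σ ∣ N →
      ∀ u : ℝ × ℝ → ℝ, C4Near u → VanishOnBoundary u →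
        energyNorm (fun p => u p - twoScale N σ u p) ≤
          C * ((N : ℝ)⁻¹ * semi2 u + ((σ : ℝ) ^ 3)⁻¹ * L2norm (uxxyy u)) :=
  ⟨9, by norm_num, fun _ _ hN hσ hdvd _ hu _ =>
    two_scale_interpolant_error_bound_general hσ (Nat.le_of_dvd hN hdvd) hu⟩
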